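/- The three partial derivatives ∂₁W = -v₂v₃ + 5v₁⁴, ∂₂W = -v₁v₃ + 5v₂⁴, ∂₃W = -v₁v₂ + 5v₃⁴ form a regular sequence in the formal power series ring ℂ[[v₁,v₂,v₃]]. -/

import Mathlib

open MvPowerSeries

/-- The partial derivatives `∂₁W = -v₂v₃ + 5v₁⁴`, `∂₂W = -v₁v₃ + 5v₂⁴`,
`∂₃W = -v₁v₂ + 5v₃⁴` of `W = -v₁v₂v₃ + v₁⁵ + v₂⁵ + v₃⁵`, as formal power series. -/
noncomputable def dW : Fin 3 → MvPowerSeries (Fin 3) ℂ :=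
  ![ - (X 1 * X 2) + 5 * X 0 ^ 4,
     - (X 0 * X 2) + 5 * X 1 ^ 4,
     - (X 0 * X 1) + 5 * X 2 ^ 4 ]

/-!
Over a local ring, a regular sequence on a Noetherian module may be permuted, and a term `a` may be
replaced by a non-unit `b` as soon as `a` is nilpotent modulo `b` and the other terms. So the
partial derivatives of `xᵖ + y^q + zʳ - xyz`, with arbitrary units as coefficients of the powers,
can be exchanged one at a time into the regular sequence `x, y, z`. Modulo `z` the first two are
powers of `x` and `y` up to units, so only the exchange of `z` for the third is not immediate.
Modulo all three, `t = xyz` is a unit multiple of each of `xᵖ`, `y^q`, `zʳ`; multiplying suitable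
powers of these relations gives `t ^ (qr + pr + pq) = C * t ^ (pqr)`. If `1/p + 1/q + 1/r < 1`,
then, `t` being a non-unit, `t` is nilpotent, and hence so is `z`. The case `p = q = r = 5` is `W`.
-/

open RingTheory.Sequence IsLocalRing

section Exchange

variable {R M : Type*} [CommRing R] [AddCommGroup M] [Module R M] {a b : R} {rs : List R} {n : ℕ}

lemma mem_ofList_of_mem (ha : a ∈ rs) : a ∈ Ideal.ofList rs :=
  Ideal.subset_span ha

lemma isWeaklyRegular_concat_of_pow_mem (h : IsWeaklyRegular M (rs ++ [a]))
    (hab : a ^ n ∈ Ideal.ofList (rs ++ [b])) : IsWeaklyRegular M (rs ++ [b]) := by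
  rw [isWeaklyRegular_append_iff, isWeaklyRegular_singleton_iff] at h ⊢
  refine ⟨h.1, (isSMulRegular_quotient_iff_mem_of_smul_mem _ _).mpr fun m hm ↦ ?_⟩
  rw [Ideal.ofList_append, Ideal.ofList_singleton] at hab
  obtain ⟨s, hs, t, ht, hst⟩ := Submodule.mem_sup.mp hab
  obtain ⟨g, rfl⟩ := Ideal.mem_span_singleton'.mp ht
  refine mem_of_isSMulRegular_quotient_of_smul_mem (h.2.pow n) ?_
  rw [← hst, add_smul, mul_smul]
  exact add_mem (Submodule.smul_mem_smul hs trivial) (Submodule.smul_mem _ g hm)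

variable [IsLocalRing R]

lemma mem_maximalIdeal_of_isRegular (h : IsRegular M rs) (ha : a ∈ rs) : a ∈ maximalIdeal R := by
  refine le_maximalIdeal (fun htop ↦ h.top_ne_smul ?_) (mem_ofList_of_mem ha)
  rw [htop, Submodule.top_smul]

lemma isRegular_concat_of_isRegular_cons_of_pow_mem [IsNoetherian R M] (h : IsRegular M (a :: rs))
    (hb : b ∈ maximalIdeal R) (hab : a ^ n ∈ Ideal.ofList (rs ++ [b])) :
    IsRegular M (rs ++ [b]) := by
  have := h.nontrivial
  have hperm : IsRegular M (rs ++ [a]) := isRegular_of_perm h (List.perm_append_singleton a rs).symm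
  refine .of_isWeaklyRegular_of_mem_maximalIdeal M (fun r hr ↦ ?_)
    (isWeaklyRegular_concat_of_pow_mem hperm.toIsWeaklyRegular hab)
  rcases List.mem_append.mp hr with hr | hr
  · exact mem_maximalIdeal_of_isRegular h (List.mem_cons_of_mem a hr)
  · rwa [List.mem_singleton.mp hr]

end Exchange

section Cusp

variable {R : Type*} [CommRing R]

lemma pow_mem_of_pow_sub_mul_pow_mem {I : Ideal R} {t c : R} {m n : ℕ}
    (ht : t ∈ (⊥ : Ideal R).jacobson) (hmn : m < n) (h : t ^ m - c * t ^ n ∈ I) : t ^ m ∈ I := by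
  obtain ⟨k, rfl⟩ := Nat.exists_eq_add_of_lt hmn
  have hunit : IsUnit (t * (-c * t ^ k) + 1) := Ideal.mem_jacobson_bot.mp ht _
  rw [← I.mul_unit_mem_iff_mem hunit]
  convert h using 1
  ring

lemma pow_eq_mul_pow_of_eq_mul_pow {S : Type*} [CommSemiring S] {x y z a b c : S} {p q r : ℕ}
    (hx : x * y * z = a * x ^ p) (hy : x * y * z = b * y ^ q) (hz : x * y * z = c * z ^ r) :
    (x * y * z) ^ (q * r + p * r + p * q) =
      a ^ (q * r) * b ^ (p * r) * c ^ (p * q) * (x * y * z) ^ (p * q * r) :=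
  calc (x * y * z) ^ (q * r + p * r + p * q)
    _ = (x * y * z) ^ (q * r) * (x * y * z) ^ (p * r) * (x * y * z) ^ (p * q) := by
      rw [pow_add, pow_add]
    _ = (a * x ^ p) ^ (q * r) * (b * y ^ q) ^ (p * r) * (c * z ^ r) ^ (p * q) := by
      rw [← hx, ← hy, ← hz]
    _ = a ^ (q * r) * b ^ (p * r) * c ^ (p * q) * (x * y * z) ^ (p * q * r) := by ring

variable {I : Ideal R} {x y z a b c : R} {p q r n : ℕ}

lemma mul_mul_pow_mem_of_sub_mul_pow_mem (ht : x * y * z ∈ (⊥ : Ideal R).jacobson)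
    (hpqr : q * r + p * r + p * q < p * q * r) (hx : x * y * z - a * x ^ p ∈ I)
    (hy : x * y * z - b * y ^ q ∈ I) (hz : x * y * z - c * z ^ r ∈ I) :
    (x * y * z) ^ (q * r + p * r + p * q) ∈ I := by
  refine pow_mem_of_pow_sub_mul_pow_mem (c := a ^ (q * r) * b ^ (p * r) * c ^ (p * q)) ht hpqr ?_
  rw [← Ideal.Quotient.eq] at hx hy hz ⊢
  simp only [map_mul, map_pow] at hx hy hz ⊢
  exact pow_eq_mul_pow_of_eq_mul_pow hx hy hz

lemma two_le_of_add_lt_mul (h : q * r + p * r + p * q < p * q * r) : 2 ≤ p := by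
  by_contra! hp
  interval_cases p <;> lia

lemma neg_mul_add_mul_pow_mem (a : R) (hn : n ≠ 0) (hx : x ∈ I) (hy : y ∈ I) :
    -(y * z) + a * x ^ n ∈ I :=
  add_mem (neg_mem (I.mul_mem_right z hy)) (I.mul_mem_left a (I.pow_mem_of_mem hx n hn.bot_lt))

lemma pow_mem_of_neg_mul_add_mul_pow_mem (ha : IsUnit a) (hz : z ∈ I)
    (h : -(y * z) + a * x ^ n ∈ I) : x ^ n ∈ I := by
  rwa [I.add_mem_iff_right (neg_mem (I.mul_mem_left y hz)), I.unit_mul_mem_iff_mem ha] at h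

lemma mul_mul_sub_mul_pow_mem (hn : n ≠ 0) (h : -(y * z) + a * x ^ (n - 1) ∈ I) :
    x * y * z - a * x ^ n ∈ I := by
  convert I.mul_mem_left (-x) h using 1
  rw [← mul_pow_sub_one hn x]
  ring

lemma exists_pow_mem_of_neg_mul_add_mul_pow_mem (ht : x * y * z ∈ (⊥ : Ideal R).jacobson)
    (hc : IsUnit c) (hpqr : q * r + p * r + p * q < p * q * r)
    (hx : -(y * z) + a * x ^ (p - 1) ∈ I) (hy : -(x * z) + b * y ^ (q - 1) ∈ I)
    (hz : -(x * y) + c * z ^ (r - 1) ∈ I) : ∃ n, z ^ n ∈ I := by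
  obtain ⟨hp, hq, hr⟩ : p ≠ 0 ∧ q ≠ 0 ∧ r ≠ 0 := by
    refine ⟨?_, ?_, ?_⟩ <;> rintro rfl <;> simp at hpqr
  have hx' : x * y * z - a * x ^ p ∈ I := mul_mul_sub_mul_pow_mem hp hx
  have hy' : x * y * z - b * y ^ q ∈ I := mul_comm y x ▸ mul_mul_sub_mul_pow_mem hq hy
  have hz' : x * y * z - c * z ^ r ∈ I := by
    rw [mul_comm, ← mul_assoc]
    exact mul_mul_sub_mul_pow_mem hr hz
  refine ⟨r * (q * r + p * r + p * q), ?_⟩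
  have hcz : (c * z ^ r) ^ (q * r + p * r + p * q) ∈ I := by
    rw [← Ideal.Quotient.eq_zero_iff_mem, map_pow, ← Ideal.Quotient.eq.mpr hz', ← map_pow,
      Ideal.Quotient.eq_zero_iff_mem]
    exact mul_mul_pow_mem_of_sub_mul_pow_mem ht hpqr hx' hy' hz'
  rwa [mul_pow, ← pow_mul, I.unit_mul_mem_iff_mem (hc.pow _)] at hcz

end Cusp

section PowerSeries

variable {σ R : Type*} [CommRing R]

lemma mem_ofList_map_X_iff {l : List σ} {f : MvPowerSeries σ R} :
    f ∈ Ideal.ofList (l.map X) ↔ ∀ m : σ →₀ ℕ, (∀ i ∈ l, m i = 0) → coeff m f = 0 := by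
  classical
  induction l generalizing f with
  | nil => simp [MvPowerSeries.ext_iff]
  | cons i l ih =>
    rw [List.map_cons, Ideal.ofList_cons, Submodule.mem_sup]
    constructor
    · rintro ⟨g, hg, h, hh, rfl⟩ m hm
      rw [List.forall_mem_cons] at hm
      rw [map_add, X_dvd_iff.mp (Ideal.mem_span_singleton.mp hg) m hm.1, ih.mp hh m hm.2, add_zero]
    · intro hf
      let g : MvPowerSeries σ R := fun m ↦ if m i = 0 then coeff m f else 0
      have coeff_g (m : σ →₀ ℕ) : coeff m g = if m i = 0 then coeff m f else 0 := rfl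
      refine ⟨f - g, ?_, g, ih.mpr fun m hm ↦ ?_, sub_add_cancel f g⟩
      · rw [Ideal.mem_span_singleton, X_dvd_iff]
        intro m hm
        rw [map_sub, coeff_g, if_pos hm, sub_self]
      · rw [coeff_g, ite_eq_right_iff]
        exact fun hi ↦ hf m (List.forall_mem_cons.mpr ⟨hi, hm⟩)

lemma mem_ofList_map_X_of_X_mul_mem {l : List σ} {i : σ} (hi : i ∉ l) {f : MvPowerSeries σ R}
    (hf : X i * f ∈ Ideal.ofList (l.map X)) : f ∈ Ideal.ofList (l.map X) := by
  classical
  rw [mem_ofList_map_X_iff] at hf ⊢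
  intro m hm
  rw [← one_mul (coeff m f), ← coeff_add_monomial_mul]
  refine hf _ fun j hj ↦ ?_
  have hij : i ≠ j := fun h ↦ hi (h ▸ hj)
  simp [hm j hj, hij]

lemma isWeaklyRegular_map_X {l : List σ} (hl : l.Nodup) :
    IsWeaklyRegular (MvPowerSeries σ R) (l.map X : List (MvPowerSeries σ R)) := by
  induction l using List.reverseRecOn with
  | nil => exact .nil _ _
  | append_singleton l i ih =>
    rw [← List.concat_eq_append, List.nodup_concat] at hl
    rw [List.map_append, List.map_singleton, isWeaklyRegular_append_iff,
      isWeaklyRegular_singleton_iff, isSMulRegular_quotient_iff_mem_of_smul_mem]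
    refine ⟨ih hl.2, fun f hf ↦ ?_⟩
    rw [smul_eq_mul, Ideal.mul_top] at hf ⊢
    exact mem_ofList_map_X_of_X_mul_mem hl.1 hf

lemma isRegular_map_X [Nontrivial R] {l : List σ} (hl : l.Nodup) :
    IsRegular (MvPowerSeries σ R) (l.map X : List (MvPowerSeries σ R)) := by
  refine ⟨isWeaklyRegular_map_X hl, fun htop ↦ one_ne_zero (α := R) ?_⟩
  rw [smul_eq_mul, Ideal.mul_top] at htop
  rw [← coeff_zero_one (σ := σ)]
  exact mem_ofList_map_X_iff.mp (htop ▸ Submodule.mem_top) 0 fun _ _ ↦ rfl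

end PowerSeries

theorem dW_isRegular_sequence_general {R M : Type*} [CommRing R] [IsLocalRing R] [AddCommGroup M]
    [Module R M] [IsNoetherian R M] {x y z a b c : R} {p q r : ℕ} (h : IsRegular M [x, y, z])
    (ha : IsUnit a) (hb : IsUnit b) (hc : IsUnit c)
    -- `1/p + 1/q + 1/r < 1`, which rules out truncation in `p - 1`, `q - 1`, `r - 1`
    (hpqr : q * r + p * r + p * q < p * q * r) :
    IsRegular M [-(y * z) + a * x ^ (p - 1), -(x * z) + b * y ^ (q - 1),
      -(x * y) + c * z ^ (r - 1)] := by
  have hp : 2 ≤ p := two_le_of_add_lt_mul hpqr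
  have hq : 2 ≤ q := two_le_of_add_lt_mul (q := p) (r := r) (by linarith)
  have hr : 2 ≤ r := two_le_of_add_lt_mul (q := p) (r := q) (by linarith)
  have hx : x ∈ maximalIdeal R := mem_maximalIdeal_of_isRegular h (by simp)
  have hy : y ∈ maximalIdeal R := mem_maximalIdeal_of_isRegular h (by simp)
  have hz : z ∈ maximalIdeal R := mem_maximalIdeal_of_isRegular h (by simp)
  set d₁ := -(y * z) + a * x ^ (p - 1)
  set d₂ := -(x * z) + b * y ^ (q - 1)
  set d₃ := -(x * y) + c * z ^ (r - 1)
  have hx₁ : x ^ (p - 1) ∈ Ideal.ofList [y, z, d₁] :=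
    pow_mem_of_neg_mul_add_mul_pow_mem ha (mem_ofList_of_mem (a := z) (by simp))
      (mem_ofList_of_mem (a := d₁) (by simp))
  have h₁ : IsRegular M [y, z, d₁] :=
    isRegular_concat_of_isRegular_cons_of_pow_mem h
      (neg_mul_add_mul_pow_mem a (by lia) hx hy) hx₁
  have hy₂ : y ^ (q - 1) ∈ Ideal.ofList [z, d₁, d₂] :=
    pow_mem_of_neg_mul_add_mul_pow_mem hb (mem_ofList_of_mem (a := z) (by simp))
      (mem_ofList_of_mem (a := d₂) (by simp))
  have h₂ : IsRegular M [z, d₁, d₂] :=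
    isRegular_concat_of_isRegular_cons_of_pow_mem h₁
      (neg_mul_add_mul_pow_mem b (by lia) hy hx) hy₂
  have ht : x * y * z ∈ (⊥ : Ideal R).jacobson :=
    maximalIdeal_le_jacobson ⊥ (Ideal.mul_mem_left _ _ hz)
  obtain ⟨n, hz₃⟩ : ∃ n, z ^ n ∈ Ideal.ofList [d₁, d₂, d₃] :=
    exists_pow_mem_of_neg_mul_add_mul_pow_mem ht hc hpqr
      (mem_ofList_of_mem (a := d₁) (by simp)) (mem_ofList_of_mem (a := d₂) (by simp))
      (mem_ofList_of_mem (a := d₃) (by simp))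
  exact isRegular_concat_of_isRegular_cons_of_pow_mem h₂
    (neg_mul_add_mul_pow_mem c (by lia) hz hx) hz₃

/-- The three partial derivatives of `W` form a regular sequence in the formal
power series ring `ℂ[[v₁,v₂,v₃]]`. -/
theorem dW_isRegular_sequence :
    RingTheory.Sequence.IsRegular (MvPowerSeries (Fin 3) ℂ) [dW 0, dW 1, dW 2] := by
  have h5 : IsUnit (5 : MvPowerSeries (Fin 3) ℂ) := by
    rw [isUnit_iff_constantCoeff, map_ofNat]
    exact .mk0 5 (by norm_num)
  exact dW_isRegular_sequence_general (isRegular_map_X (l := [0, 1, 2]) (by decide)) h5 h5 h5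
    (p := 5) (q := 5) (r := 5) (by norm_num)
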